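/- arXiv:1705.04289 — 5 statements merged into one kernel-verified Lean document; each statement's English description precedes it below -/
import Mathlib

section
/- Let H, χ be real numbers with H·χ > 1, and let w > 0 satisfy w·exp(w) = (H·χ − 1)/e. Then t := (H·χ − 1)/w satisfies t·ln(t) = t + H·χ − 1. (Key step in the proof of Theorem 1: t = (Hχ−1)/W((Hχ−1)/e) solves the reduced stationarity equation t·ln t = t + Hχ − 1.) -/
/-- Key step in the proof of Theorem 1: if `H * χ > 1` and `w > 0` satisfies
`w * exp w = (H * χ - 1) / e`, then `t := (H * χ - 1) / w` satisfies
`t * ln t = t + H * χ - 1`. -/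
theorem stmt_1 (H χ : ℝ) (hHχ : H * χ > 1) (w : ℝ) (hw : 0 < w)
    (hlam : w * Real.exp w = (H * χ - 1) / Real.exp 1) :
    ((H * χ - 1) / w) * Real.log ((H * χ - 1) / w)
      = (H * χ - 1) / w + H * χ - 1 := by
  have h : (H * χ - 1) / w = Real.exp (w + 1) := by
    rw [eq_div_iff (Real.exp_pos 1).ne'] at hlam
    rw [div_eq_iff hw.ne', Real.exp_add, ← hlam]
    ring
  have h2 : H * χ - 1 = Real.exp (w + 1) * w := (div_eq_iff hw.ne').mp h
  rw [h, Real.log_exp]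
  linarith
end

section
/- Fix real parameters T, τ, ε, χ, H with T > 0, 0 < τ < T, ε > 0, χ > 0, H > 0 and H·χ > 1. Set c := χ·(T − τ) − ε and assume c > 0. Let w > 0 satisfy w·exp(w) = (H·χ − 1)/e, and define θ* := (T − τ)/T − w·H·c / (T·(H·χ − 1)·(1 + w)). Then a* := T − θ*·T − τ > 0, b* := χ·θ*·T − ε > 0, and the stationarity equation ln(1 + H·b*/a*) = H·(χ·a* + b*)/(a* + H·b*) holds. (Verification part of Theorem 1: the closed-form harvesting ratio θ* = (T−τ)/T − W((Hχ−1)/e)·H·(χT − χτ − ε)/(T(Hχ−1)(1 + W((Hχ−1)/e))) is a stationary point of the rate function.) -/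
/-- Verification part of Theorem 1: the closed-form harvesting ratio `θ*` gives
positive transmission time `a*` and residual energy `b*`, and satisfies the
stationarity equation. -/
theorem stmt_3 (T τ ε χ H : ℝ)
    (hT : 0 < T) (hτ0 : 0 < τ) (hτT : τ < T) (hε : 0 < ε) (hχ : 0 < χ)
    (hH : 0 < H) (hHχ : H * χ > 1)
    (c : ℝ) (hc : c = χ * (T - τ) - ε) (hcpos : 0 < c)
    (w : ℝ) (hw : 0 < w)
    (hlam : w * Real.exp w = (H * χ - 1) / Real.exp 1)
    (θstar : ℝ)
    (hθ : θstar = (T - τ) / T - w * H * c / (T * (H * χ - 1) * (1 + w))) :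
    0 < T - θstar * T - τ ∧ 0 < χ * θstar * T - ε ∧
      Real.log (1 + H * (χ * θstar * T - ε) / (T - θstar * T - τ))
        = H * (χ * (T - θstar * T - τ) + (χ * θstar * T - ε))
            / ((T - θstar * T - τ) + H * (χ * θstar * T - ε)) := by
  obtain ⟨K, hK⟩ : ∃ K, K = H * χ - 1 := ⟨_, rfl⟩
  have hKpos : 0 < K := by linarith
  have hw1 : 0 < 1 + w := by linarith
  have hKe : K = w * Real.exp (w + 1) := by
    rw [← hK, eq_div_iff (Real.exp_pos 1).ne'] at hlam
    rw [Real.exp_add]; linarith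
  have hKw : w < K := by
    have h1 : 1 < Real.exp (w + 1) := Real.one_lt_exp_iff.mpr (by linarith)
    rw [hKe]; nlinarith
  obtain ⟨a, ha⟩ : ∃ a, a = T - θstar * T - τ := ⟨_, rfl⟩
  have hb : χ * θstar * T - ε = c - χ * a := by rw [ha, hc]; ring
  have haeq : a = w * H * c / (K * (1 + w)) := by
    rw [ha, hθ, ← hK]
    field_simp
    ring
  have hapos : 0 < a := by rw [haeq]; positivity
  have hmul : a * (K * (1 + w)) = w * H * c := by
    rw [haeq]; field_simp
  have hsum : a + H * (c - χ * a) = H * c / (1 + w) := by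
    rw [eq_div_iff hw1.ne']
    have : H * χ = K + 1 := by linarith
    linear_combination (-a * (1 + w)) * this - hmul
  have hbeq : c - χ * a = c * (K - w) / (K * (1 + w)) := by
    rw [eq_div_iff (by positivity)]
    linear_combination (-χ) * hmul + c * w * hK
  rw [hb, ← ha]
  refine ⟨hapos, ?_, ?_⟩
  · rw [hbeq]
    have : 0 < K - w := by linarith
    positivity
  · have h1 : 1 + H * (c - χ * a) / a = Real.exp (w + 1) := by
      have h2 : 1 + H * (c - χ * a) / a = (a + H * (c - χ * a)) / a := by
        field_simp
      rw [h2, hsum, div_eq_iff hapos.ne', div_eq_iff hw1.ne']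
      have h3 : w * (H * c) = w * (Real.exp (w + 1) * a * (1 + w)) := by
        linear_combination (-1) * hmul + a * (1 + w) * hKe
      exact mul_left_cancel₀ hw.ne' h3
    rw [h1, Real.log_exp, hsum]
    have : χ * a + (c - χ * a) = c := by ring
    rw [this]
    field_simp
    ring
end

section
/- Fix real parameters T, τ, ε, χ, H with T > 0, 0 < τ < T, ε > 0, χ > 0, H > 0 and H·χ > 1. Set c := χ·(T − τ) − ε and assume c > 0. Let w > 0 satisfy w·exp(w) = (H·χ − 1)/e, and define θ* := (T − τ)/T − w·H·c / (T·(H·χ − 1)·(1 + w)). Then θ* lies in the open interval I = (ε/(χT), (T − τ)/T), and the rate function f(θ) = (1 − θ − τ/T)·log₂(1 + H·(χθT − ε)/(T − θT − τ)) attains its maximum over I at θ = θ*. (Theorem 1: the closed-form harvesting ratio θ* is the optimal harvesting ratio.) -/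
/-- Theorem 1: the closed-form harvesting ratio `θ*` lies in the feasible
interval `(ε/(χT), (T − τ)/T)` and maximizes the rate function there. -/
theorem stmt_4 (T τ ε χ H : ℝ)
    (hT : 0 < T) (hτ0 : 0 < τ) (hτT : τ < T) (hε : 0 < ε) (hχ : 0 < χ)
    (hH : 0 < H) (hHχ : H * χ > 1)
    (c : ℝ) (hc : c = χ * (T - τ) - ε) (hcpos : 0 < c)
    (w : ℝ) (hw : 0 < w)
    (hlam : w * Real.exp w = (H * χ - 1) / Real.exp 1)
    (θstar : ℝ)
    (hθ : θstar = (T - τ) / T - w * H * c / (T * (H * χ - 1) * (1 + w))) :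
    θstar ∈ Set.Ioo (ε / (χ * T)) ((T - τ) / T) ∧
      IsMaxOn
        (fun θ : ℝ =>
          (1 - θ - τ / T) *
            Real.logb 2 (1 + H * (χ * θ * T - ε) / (T - θ * T - τ)))
        (Set.Ioo (ε / (χ * T)) ((T - τ) / T)) θstar := by
  obtain ⟨k, hk⟩ : ∃ k, k = H * χ - 1 := ⟨_, rfl⟩
  have hkpos : 0 < k := by rw [hk]; linarith
  rw [← hk] at hlam hθ
  have hk2 : k = w * Real.exp (1 + w) := by
    rw [Real.exp_add]
    have h1 := Real.exp_pos 1
    field_simp at hlam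
    linarith
  have hwk : w < k := by
    have h1 : 1 < Real.exp (1 + w) := Real.one_lt_exp_iff.mpr (by linarith)
    rw [hk2]
    nlinarith
  have hlog : Real.log (k / w) = 1 + w := by
    rw [hk2, mul_div_cancel_left₀ _ hw.ne', Real.log_exp]
  obtain ⟨a, ha⟩ : ∃ a, a = w * H * c / (k * (1 + w)) := ⟨_, rfl⟩
  have hapos : 0 < a := by rw [ha]; positivity
  have hθa : T - θstar * T - τ = a := by
    rw [hθ, ha]; field_simp; ring
  have hac : χ * a < c := by
    rw [ha, ← mul_div_assoc, div_lt_iff₀ (by positivity)]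
    have h2 : H * χ = k + 1 := by linarith
    have h3 : χ * (w * H * c) = (w * (k + 1)) * c := by rw [← h2]; ring
    rw [h3, mul_comm c]
    apply mul_lt_mul_of_pos_right _ hcpos
    linarith
  have hmem : θstar ∈ Set.Ioo (ε / (χ * T)) ((T - τ) / T) := by
    constructor
    · rw [div_lt_iff₀ (by positivity)]
      rw [← hθa] at hac
      linarith
    · rw [lt_div_iff₀ hT]
      linarith
  have hl2 : 0 < Real.log 2 := Real.log_pos (by norm_num)
  have key : ∀ θ ∈ Set.Ioo (ε / (χ * T)) ((T - τ) / T), 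
      (1 - θ - τ / T) *
            Real.logb 2 (1 + H * (χ * θ * T - ε) / (T - θ * T - τ))
        ≤ H * c * w / k / (T * Real.log 2) := by
    rintro θ ⟨h1, h2⟩
    rw [div_lt_iff₀ (by positivity)] at h1
    rw [lt_div_iff₀ hT] at h2
    obtain ⟨x, hx⟩ : ∃ x, x = T - θ * T - τ := ⟨_, rfl⟩
    have hxpos : 0 < x := by linarith
    have e1 : 1 - θ - τ / T = x / T := by rw [hx]; field_simp
    rw [e1, ← hx, Real.logb]
    obtain ⟨y, hy⟩ : ∃ y, y = 1 + H * (χ * θ * T - ε) / x := ⟨_, rfl⟩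
    rw [← hy]
    have hb : 0 < χ * θ * T - ε := by linarith
    have hypos : 0 < y := by rw [hy]; positivity
    have hxy : x * (y + k) = H * c := by
      rw [hy, hk, hc]; field_simp; rw [hx]; ring
    have h3 := Real.log_le_sub_one_of_pos (show 0 < y / (k / w) by positivity)
    rw [Real.log_div hypos.ne' (by positivity), hlog] at h3
    have h4 : Real.log y ≤ w * (y + k) / k := by
      have : w * (y + k) / k = y / (k / w) + w := by field_simp
      linarith
    have h5 : x * Real.log y ≤ H * c * w / k := by
      calc x * Real.log y ≤ x * (w * (y + k) / k) := by gcongr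
        _ = H * c * w / k := by rw [← hxy]; ring
    rw [div_mul_div_comm]
    gcongr
  refine ⟨hmem, fun θ hθ' => ?_⟩
  refine (key θ hθ').trans (le_of_eq ?_)
  have e1 : 1 - θstar - τ / T = a / T := by rw [← hθa]; field_simp
  have e2 : 1 + H * (χ * θstar * T - ε) / a = k / w := by
    have h6 : χ * θstar * T - ε = c - χ * a := by rw [← hθa, hc]; ring
    have h7 : H * c = a * (k / w + k) := by rw [ha]; field_simp
    have h8 : H * (c - χ * a) = a * (k / w + k) - (k + 1) * a := by
      rw [← h7, hk]; ring
    rw [h6, h8]; field_simp; ring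
  show _ = (1 - θstar - τ / T) *
            Real.logb 2 (1 + H * (χ * θstar * T - ε) / (T - θstar * T - τ))
  rw [hθa, e1, e2, Real.logb, hlog, ha]
  field_simp
end

section
/- Fix real parameters T, τ, ε, χ, H with T > 0, 0 < τ < T, ε > 0, χ > 0, H > 0, H·χ > 1, and assume ε/(χT) < (T − τ)/T. Then the rate function f(θ) = (1 − θ − τ/T)·log₂(1 + H·(χθT − ε)/(T − θT − τ)) is strictly concave on the open interval I = (ε/(χT), (T − τ)/T). (Lemma 1 of the paper: the objective function of problem P3 is concave in the harvesting ratio θ.) -/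
/-- Lemma 1 of the paper: the rate function is strictly concave on the
feasible interval `(ε/(χT), (T − τ)/T)` when `H * χ > 1`. -/
theorem stmt_5 (T τ ε χ H : ℝ)
    (hT : 0 < T) (hτ0 : 0 < τ) (hτT : τ < T) (hε : 0 < ε) (hχ : 0 < χ)
    (hH : 0 < H) (hHχ : H * χ > 1)
    (hI : ε / (χ * T) < (T - τ) / T) :
    StrictConcaveOn ℝ (Set.Ioo (ε / (χ * T)) ((T - τ) / T))
      (fun θ : ℝ =>
        (1 - θ - τ / T) *
          Real.logb 2 (1 + H * (χ * θ * T - ε) / (T - θ * T - τ))) := by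
  have hχT : 0 < χ * T := mul_pos hχ hT
  have key : ε < χ * (T - τ) := by
    rw [div_lt_div_iff₀ hχT hT] at hI
    by_contra hc
    push Not at hc
    nlinarith [mul_le_mul_of_nonneg_right hc hT.le]
  refine ⟨convex_Ioo _ _, ?_⟩
  rintro x ⟨hx1, hx2⟩ y ⟨hy1, hy2⟩ hxy p q hp hq hpq
  rw [div_lt_iff₀ hχT] at hx1 hy1
  rw [lt_div_iff₀ hT] at hx2 hy2
  have eqA : ∀ t : ℝ, 1 - t - τ / T = (T - t * T - τ) / T := by
    intro t; field_simp
  simp only [smul_eq_mul, eqA, Real.logb]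
  have hax : 0 < T - x * T - τ := by linarith
  have hay : 0 < T - y * T - τ := by linarith
  have hbx : 0 < χ * x * T - ε := by linarith
  have hby : 0 < χ * y * T - ε := by linarith
  have ham : T - (p * x + q * y) * T - τ
      = p * (T - x * T - τ) + q * (T - y * T - τ) := by
    linear_combination (-(T - τ)) * hpq
  have hbm : χ * (p * x + q * y) * T - ε
      = p * (χ * x * T - ε) + q * (χ * y * T - ε) := by
    linear_combination ε * hpq
  have hne : (χ * x * T - ε) * (T - y * T - τ) ≠ (χ * y * T - ε) * (T - x * T - τ) := by
    intro h
    have h2 : (x - y) * (T * (χ * (T - τ) - ε)) = 0 := by linear_combination h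
    rcases mul_eq_zero.1 h2 with h3 | h3
    · exact hxy (sub_eq_zero.1 h3)
    · exact (mul_pos hT (sub_pos.2 key)).ne' h3
  rw [ham, hbm]
  generalize T - x * T - τ = a at *
  generalize T - y * T - τ = c at *
  generalize χ * x * T - ε = b at *
  generalize χ * y * T - ε = d at *
  have hM : 0 < p * a + q * c := by positivity
  have hu : 0 < 1 + H * b / a := by positivity
  have hv : 0 < 1 + H * d / c := by positivity
  have huv : 1 + H * b / a ≠ 1 + H * d / c := by
    intro h
    apply hne
    have h1 := add_left_cancel h
    rw [div_eq_div_iff hax.ne' hay.ne'] at h1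
    exact mul_left_cancel₀ hH.ne' (by linear_combination h1)
  have hlog := strictConcaveOn_log_Ioi.2 (Set.mem_Ioi.2 hu) (Set.mem_Ioi.2 hv) huv
    (show 0 < p * a / (p * a + q * c) by positivity)
    (show 0 < q * c / (p * a + q * c) by positivity) (by field_simp)
  simp only [smul_eq_mul] at hlog
  have harg : p * a / (p * a + q * c) * (1 + H * b / a)
      + q * c / (p * a + q * c) * (1 + H * d / c)
      = 1 + H * (p * b + q * d) / (p * a + q * c) := by
    field_simp
    ring
  rw [harg] at hlog
  have hl2 : 0 < Real.log 2 := Real.log_pos (by norm_num)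
  have := mul_lt_mul_of_pos_left hlog
    (show 0 < (p * a + q * c) / T / Real.log 2 by positivity)
  convert this using 1
  · field_simp
  · field_simp
end

section
/- Fix real parameters T, τ, ε, χ, H with T > 0, 0 < τ < T, ε > 0, χ > 0, H > 0, H·χ > 1, and assume ε/(χT) < (T − τ)/T. Then the function θ ↦ (1 − θ − τ/T)·log₂(T − θT − τ + H·(χθT − ε)) is strictly concave on the open interval I = (ε/(χT), (T − τ)/T). (Part A in the proof of Lemma 1: the first term in the decomposition of the rate function is concave when Hχ > 1.) -/
/-- Part A in the proof of Lemma 1: the first term of the decomposed rate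
function is strictly concave on the feasible interval when `H * χ > 1`. -/
theorem stmt_7 (T τ ε χ H : ℝ)
    (hT : 0 < T) (hτ0 : 0 < τ) (hτT : τ < T) (hε : 0 < ε) (hχ : 0 < χ)
    (hH : 0 < H) (hHχ : H * χ > 1)
    (hI : ε / (χ * T) < (T - τ) / T) :
    StrictConcaveOn ℝ (Set.Ioo (ε / (χ * T)) ((T - τ) / T))
      (fun θ : ℝ =>
        (1 - θ - τ / T) *
          Real.logb 2 (T - θ * T - τ + H * (χ * θ * T - ε))) := by
  have hk : 0 < T * (H * χ - 1) := mul_pos hT (by linarith)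
  have hpos : ∀ θ ∈ Set.Ioo (ε / (χ * T)) ((T - τ) / T),
      0 < 1 - θ - τ / T ∧ 0 < T - θ * T - τ + H * (χ * θ * T - ε) := by
    rintro θ ⟨h1, h2⟩
    have h3 : (T - τ) / T = 1 - τ / T := by field_simp
    refine ⟨by linarith, ?_⟩
    rw [div_lt_iff₀ (by positivity)] at h1
    rw [lt_div_iff₀ hT] at h2
    have : 0 < H * (χ * θ * T - ε) := mul_pos hH (by nlinarith)
    linarith
  refine LinearOrder.strictConcaveOn_of_lt (convex_Ioo _ _) ?_
  intro x hx y hy hxy p q hp hq hpq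
  have hz := (convex_Ioo _ _) hx hy hp.le hq.le hpq
  obtain ⟨az, -⟩ := hpos _ hz
  obtain ⟨-, bx⟩ := hpos _ hx
  obtain ⟨-, bY⟩ := hpos _ hy
  have hb : T - x * T - τ + H * (χ * x * T - ε) < T - y * T - τ + H * (χ * y * T - ε) := by
    nlinarith
  have hlog := strictConcaveOn_log_Ioi.2 (Set.mem_Ioi.2 bx) (Set.mem_Ioi.2 bY) hb.ne hp hq hpq
  have hL := Real.log_lt_log bx hb
  simp only [smul_eq_mul] at *
  have hq' : q = 1 - p := by linarith
  subst hq'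
  rw [show p * (T - x * T - τ + H * (χ * x * T - ε)) +
      (1 - p) * (T - y * T - τ + H * (χ * y * T - ε)) =
      T - (p * x + (1 - p) * y) * T - τ + H * (χ * (p * x + (1 - p) * y) * T - ε) by ring] at hlog
  have h2 : 0 < Real.log 2 := Real.log_pos (by norm_num)
  simp only [Real.logb]
  generalize Real.log (T - x * T - τ + H * (χ * x * T - ε)) = L1 at *
  generalize Real.log (T - y * T - τ + H * (χ * y * T - ε)) = L2 at *
  generalize Real.log (T - (p * x + (1 - p) * y) * T - τ +
    H * (χ * (p * x + (1 - p) * y) * T - ε)) = L at *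
  have e1 := mul_lt_mul_of_pos_left hlog az
  have e2 := mul_pos (mul_pos hp hq) (mul_pos (sub_pos.2 hxy) (sub_pos.2 hL))
  have key : p * ((1 - x - τ / T) * L1) + (1 - p) * ((1 - y - τ / T) * L2) <
      (1 - (p * x + (1 - p) * y) - τ / T) * L := by
    nlinarith
  have := div_lt_div_of_pos_right key h2
  convert this using 1 <;> ring
end
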